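/- arXiv:2012.00903 — 2 statements merged into one kernel-verified Lean document; each statement's English description precedes it below -/
import Mathlib

section
/- Let A be a unital C*-algebra, B ⊆ A a commutative unital C*-subalgebra, E : A → B a conditional expectation onto B, and T ∈ A an element satisfying the B-valued circular moment relations with respect to E. Then for every n ≥ 1, every ε(1),…,ε(n) ∈ {1,*} and all b₁,…,b_n ∈ B, one has |E(T^{(ε(1))} b₁ T^{(ε(2))} b₂ ⋯ T^{(ε(n))} b_n)| ≤ (∏_{j=1}^n ‖b_j‖) · E(T^{(ε(1))} T^{(ε(2))} ⋯ T^{(ε(n))}) in the C*-order of B. -/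
open Filter
open scoped ComplexOrder

section Preamble

variable {A : Type*} [CStarAlgebra A] [PartialOrder A] [StarOrderedRing A]

/-- The absolute value `(a* a)^{1/2}` of an element of a C*-algebra. -/
noncomputable def cabs (a : A) : A := CFC.sqrt (star a * a)

/-- `E : A → A` is a conditional expectation onto the C*-subalgebra `B`:
it takes values in `B`, fixes `B`, is a `B`-bimodule map, and is positive and contractive. -/
structure IsCondExp (B : StarSubalgebra ℂ A) (E : A →ₗ[ℂ] A) : Prop where
  mem_range : ∀ x : A, E x ∈ B
  fixes : ∀ b ∈ B, E b = b
  bimodule : ∀ b₁ ∈ B, ∀ b₂ ∈ B, ∀ x : A, E (b₁ * x * b₂) = b₁ * E x * b₂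
  positive : ∀ x : A, 0 ≤ x → 0 ≤ E x
  contractive : ∀ x : A, ‖E x‖ ≤ ‖x‖

/-- `word T [(ε₁,b₁),…,(εₙ,bₙ)] = T^{ε₁} * b₁ * ⋯ * T^{εₙ} * bₙ`, where `true` stands for
the exponent `1` and `false` for the exponent `*`. -/
def word (T : A) (l : List (Bool × A)) : A :=
  (l.map (fun p => (cond p.1 T (star T)) * p.2)).prod

/-- A word is balanced when there are as many `*`'s as `1`'s among the exponents. -/
abbrev IsBalanced (l : List (Bool × A)) : Prop :=
  2 * l.countP (fun p => p.1) = l.length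

/-- `T` satisfies the `B`-valued circular moment relations with respect to `E`:
the expectation of any unbalanced word vanishes, and the expectation of a nonempty balanced word
`T^{ε₁} b₁ ⋯ T^{εₙ} bₙ` satisfies the moment-cumulant recursion of a `B`-valued circular
element, where the sum runs over those positions `j ∈ {2,…,n}` (here `j = i + 2` for the
`i`-th entry of the tail, `0`-based) for which `ε_j ≠ ε₁` and the prefix `ε₁,…,ε_j` is
balanced. -/
structure IsBCircular (B : StarSubalgebra ℂ A) (E : A →ₗ[ℂ] A) (T : A) : Prop where
  expect_unbalanced : ∀ l : List (Bool × A), (∀ p ∈ l, p.2 ∈ B) →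
    ¬ IsBalanced l → E (word T l) = 0
  expect_cons_one : ∀ b ∈ B, ∀ tl : List (Bool × A), (∀ p ∈ tl, p.2 ∈ B) →
    IsBalanced ((true, b) :: tl) →
    E (word T ((true, b) :: tl)) =
      ∑ i ∈ Finset.range tl.length,
        if (tl.getD i (true, 1)).1 = false ∧ IsBalanced ((true, b) :: tl.take (i + 1)) then
          E (T * (b * E (word T (tl.take i))) * star T) * (tl.getD i (true, 1)).2 *
            E (word T (tl.drop (i + 1)))
        else 0
  expect_cons_star : ∀ b ∈ B, ∀ tl : List (Bool × A), (∀ p ∈ tl, p.2 ∈ B) →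
    IsBalanced ((false, b) :: tl) →
    E (word T ((false, b) :: tl)) =
      ∑ i ∈ Finset.range tl.length,
        if (tl.getD i (true, 1)).1 = true ∧ IsBalanced ((false, b) :: tl.take (i + 1)) then
          E (star T * (b * E (word T (tl.take i))) * T) * (tl.getD i (true, 1)).2 *
            E (word T (tl.drop (i + 1)))
        else 0

end Preamble

section Helpers

variable {A : Type*} [CStarAlgebra A] [PartialOrder A] [StarOrderedRing A]

/-- Positivity in a commutative C*-subalgebra is detected by characters. -/
lemma nonneg_iff_chars (B : StarSubalgebra ℂ A) (hBclosed : IsClosed (B : Set A))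
    (hBcomm : ∀ x ∈ B, ∀ y ∈ B, x * y = y * x) (x : B) :
    0 ≤ (x : A) ↔ ∀ φ : B →⋆ₐ[ℂ] ℂ, 0 ≤ φ x := by
  haveI := hBclosed
  letI : CommCStarAlgebra B :=
    { (inferInstance : CStarAlgebra B) with
      mul_comm := fun a b => Subtype.ext (hBcomm a a.2 b b.2) }
  constructor
  · intro hx φ
    have h1 : φ x ∈ spectrum ℂ x := AlgHom.apply_mem_spectrum φ x
    rw [StarSubalgebra.spectrum_eq] at h1
    exact spectrum_nonneg_of_nonneg hx h1
  · intro h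
    have hs : ∀ φ : WeakDual.characterSpace ℂ B, 0 ≤ φ x := by
      intro φ
      exact h { WeakDual.CharacterSpace.toAlgHom φ with map_star' := fun a => map_star φ a }
    have hsa : IsSelfAdjoint x := by
      apply (gelfandTransform_isometry B).injective
      ext φ
      change φ (star x) = φ x
      rw [map_star]
      exact (IsSelfAdjoint.of_nonneg (hs φ))
    have hsa' : IsSelfAdjoint (x : A) := congrArg Subtype.val hsa
    rw [StarOrderedRing.nonneg_iff_spectrum_nonneg (R := ℂ) (x : A) hsa'.isStarNormal]
    intro z hz
    rw [← StarSubalgebra.spectrum_eq] at hz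
    obtain ⟨φ, rfl⟩ := WeakDual.CharacterSpace.mem_spectrum_iff_exists.1 hz
    exact hs φ

/-- Domination `|x| ≤ y` tested on characters of `B`. -/
def Dom (B : StarSubalgebra ℂ A) (x y : A) : Prop :=
  ∃ (hx : x ∈ B) (hy : y ∈ B), ∀ φ : B →⋆ₐ[ℂ] ℂ, ((‖φ ⟨x, hx⟩‖ : ℝ) : ℂ) ≤ φ ⟨y, hy⟩

lemma Dom.zero (B : StarSubalgebra ℂ A) : Dom B (0 : A) 0 :=
  ⟨B.zero_mem, B.zero_mem, fun φ => by
    have : (⟨0, B.zero_mem⟩ : B) = 0 := rfl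
    simp [this]⟩

lemma Dom.one (B : StarSubalgebra ℂ A) : Dom B (1 : A) 1 :=
  ⟨B.one_mem, B.one_mem, fun φ => by
    have : (⟨1, B.one_mem⟩ : B) = 1 := rfl
    simp [this]⟩

lemma Dom.add {B : StarSubalgebra ℂ A} {x y x' y' : A} (h : Dom B x y) (h' : Dom B x' y') :
    Dom B (x + x') (y + y') := by
  obtain ⟨hx, hy, h⟩ := h
  obtain ⟨hx', hy', h'⟩ := h'
  refine ⟨B.add_mem hx hx', B.add_mem hy hy', fun φ => ?_⟩
  have e1 : (⟨x + x', B.add_mem hx hx'⟩ : B) = ⟨x, hx⟩ + ⟨x', hx'⟩ := rfl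
  have e2 : (⟨y + y', B.add_mem hy hy'⟩ : B) = ⟨y, hy⟩ + ⟨y', hy'⟩ := rfl
  rw [e1, e2, map_add, map_add]
  refine le_trans ?_ (add_le_add (h φ) (h' φ))
  exact_mod_cast norm_add_le _ _

lemma Dom.mul {B : StarSubalgebra ℂ A} {x y x' y' : A} (h : Dom B x y) (h' : Dom B x' y') :
    Dom B (x * x') (y * y') := by
  obtain ⟨hx, hy, h⟩ := h
  obtain ⟨hx', hy', h'⟩ := h'
  refine ⟨B.mul_mem hx hx', B.mul_mem hy hy', fun φ => ?_⟩
  have e1 : (⟨x * x', B.mul_mem hx hx'⟩ : B) = ⟨x, hx⟩ * ⟨x', hx'⟩ := rfl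
  have e2 : (⟨y * y', B.mul_mem hy hy'⟩ : B) = ⟨y, hy⟩ * ⟨y', hy'⟩ := rfl
  rw [e1, e2, map_mul, map_mul, norm_mul, Complex.ofReal_mul]
  have p : (0 : ℂ) ≤ ((‖φ ⟨x', hx'⟩‖ : ℝ) : ℂ) := by exact_mod_cast norm_nonneg _
  have q : (0 : ℂ) ≤ ((‖φ ⟨x, hx⟩‖ : ℝ) : ℂ) := by exact_mod_cast norm_nonneg _
  exact mul_le_mul (h φ) (h' φ) p (q.trans (h φ))

lemma Dom.sum {B : StarSubalgebra ℂ A} {ι : Type*} (s : Finset ι) {f g : ι → A}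
    (h : ∀ i ∈ s, Dom B (f i) (g i)) : Dom B (∑ i ∈ s, f i) (∑ i ∈ s, g i) := by
  classical
  induction s using Finset.induction_on with
  | empty => simpa using Dom.zero B
  | insert a s ha ih =>
    rw [Finset.sum_insert ha, Finset.sum_insert ha]
    exact (h a (Finset.mem_insert_self _ _)).add
      (ih fun i hi => h i (Finset.mem_insert_of_mem hi))

lemma Dom.norm {B : StarSubalgebra ℂ A} (hBclosed : IsClosed (B : Set A)) {b : A} (hb : b ∈ B) :
    Dom B b (((‖b‖ : ℝ) : ℂ) • 1) := by
  haveI := hBclosed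
  refine ⟨hb, B.smul_mem B.one_mem _, fun φ => ?_⟩
  have e2 : (⟨((‖b‖ : ℝ) : ℂ) • 1, B.smul_mem B.one_mem _⟩ : B) = ((‖b‖ : ℝ) : ℂ) • (1 : B) := rfl
  rw [e2, map_smul, map_one, smul_eq_mul, mul_one]
  have := NonUnitalStarAlgHom.norm_apply_le φ (⟨b, hb⟩ : B)
  exact_mod_cast this

lemma Dom.map {B : StarSubalgebra ℂ A} (hBclosed : IsClosed (B : Set A))
    (hBcomm : ∀ x ∈ B, ∀ y ∈ B, x * y = y * x) {E : A →ₗ[ℂ] A} (hE : IsCondExp B E)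
    (S : A) {c d : A} (h : Dom B c d) : Dom B (E (S * c * star S)) (E (S * d * star S)) := by
  obtain ⟨hc, hd, h⟩ := h
  refine ⟨hE.mem_range _, hE.mem_range _, fun φ => ?_⟩
  let P : A →ₚ[ℂ] A := PositiveLinearMap.mk₀ E (fun x hx => hE.positive x hx)
  have hstar : ∀ x, E (star x) = star (E x) := fun x => map_star P x
  set w : ℂ := φ ⟨E (S * c * star S), hE.mem_range _⟩ with hw
  -- choose a phase
  obtain ⟨θ, hθ, hθw⟩ : ∃ θ : ℂ, ‖θ‖ = 1 ∧ θ * w = (‖w‖ : ℝ) := by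
    by_cases h0 : w = 0
    · exact ⟨1, by simp, by simp [h0]⟩
    · have hn : ((‖w‖ : ℝ) : ℂ) ≠ 0 := by simpa using h0
      refine ⟨(‖w‖ : ℝ) / w, ?_, div_mul_cancel₀ _ h0⟩
      have hn' : ‖w‖ ≠ 0 := by simpa using h0
      rw [norm_div, Complex.norm_real, norm_norm, div_self hn']
  set r : A := θ • c + star (θ • c) with hr
  have hrB : r ∈ B := B.add_mem (B.smul_mem hc _) (B.star_mem' (B.smul_mem hc _))
  have key : 0 ≤ (2 : ℂ) • d - r := by
    have hm : (2 : ℂ) • d - r ∈ B := B.sub_mem (B.smul_mem hd _) hrB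
    refine (nonneg_iff_chars B hBclosed hBcomm ⟨_, hm⟩).2 fun ψ => ?_
    have e : (⟨(2 : ℂ) • d - r, hm⟩ : B) =
      (2 : ℂ) • ⟨d, hd⟩ - (θ • ⟨c, hc⟩ + star (θ • (⟨c, hc⟩ : B))) := rfl
    rw [e, map_sub, map_add, map_smul, map_star, map_smul]
    have h1 := h ψ
    set u := ψ ⟨c, hc⟩
    set v := ψ ⟨d, hd⟩
    have h2 : (θ * u).re ≤ ‖u‖ := by
      calc (θ * u).re ≤ ‖θ * u‖ := Complex.re_le_norm _
        _ = ‖u‖ := by rw [norm_mul, hθ, one_mul]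
    rw [Complex.le_def] at h1 ⊢
    simp at h1 h2 ⊢
    constructor <;> linarith [h1.1, h1.2]
  have key2 : 0 ≤ S * ((2 : ℂ) • d - r) * star S := star_right_conjugate_nonneg key S
  have key3 := (nonneg_iff_chars B hBclosed hBcomm ⟨_, hE.mem_range _⟩).1 (hE.positive _ key2) φ
  have e : (⟨E (S * ((2 : ℂ) • d - r) * star S), hE.mem_range _⟩ : B) =
      (2 : ℂ) • ⟨E (S * d * star S), hE.mem_range _⟩ -
        (θ • ⟨E (S * c * star S), hE.mem_range _⟩ +
          star (θ • (⟨E (S * c * star S), hE.mem_range _⟩ : B))) := by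
    apply Subtype.ext
    change E (S * ((2 : ℂ) • d - r) * star S) = (2 : ℂ) • E (S * d * star S) -
      (θ • E (S * c * star S) + star (θ • E (S * c * star S)))
    rw [← map_smul, ← map_smul, ← hstar, ← map_add, ← map_sub, hr]
    congr 1
    simp [mul_add, add_mul, mul_sub, sub_mul, mul_assoc]
  rw [e, map_sub, map_add, map_smul, map_star, map_smul, ← hw, smul_eq_mul, smul_eq_mul, hθw,
    Complex.le_def] at key3
  rw [Complex.le_def]
  simp at key3 ⊢
  constructor <;> linarith [key3.1, key3.2]

/-- The moment recursion, uniformly in the first exponent. -/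
lemma recursion {B : StarSubalgebra ℂ A} {E : A →ₗ[ℂ] A} {T : A} (hT : IsBCircular B E T)
    (s : Bool) (b : A) (hb : b ∈ B) (tl : List (Bool × A)) (htl : ∀ p ∈ tl, p.2 ∈ B)
    (hbal : IsBalanced ((s, b) :: tl)) :
    E (word T ((s, b) :: tl)) =
      ∑ i ∈ Finset.range tl.length,
        if (tl.getD i (true, 1)).1 = !s ∧ IsBalanced ((s, b) :: tl.take (i + 1)) then
          E (cond s T (star T) * (b * E (word T (tl.take i))) * star (cond s T (star T))) *
            (tl.getD i (true, 1)).2 * E (word T (tl.drop (i + 1)))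
        else 0 := by
  cases s
  · simpa using hT.expect_cons_star b hb tl htl hbal
  · simpa using hT.expect_cons_one b hb tl htl hbal

/-- Replace all coefficients by `1`. -/
def strip (l : List (Bool × A)) : List (Bool × A) := l.map (fun p => (p.1, (1 : A)))

/-- Product of the norms of the coefficients. -/
noncomputable def cn (l : List (Bool × A)) : ℂ := (((l.map (fun p => ‖p.2‖)).prod : ℝ) : ℂ)

lemma balanced_strip (l : List (Bool × A)) : IsBalanced (strip l) ↔ IsBalanced l := by
  simp [IsBalanced, strip, List.countP_map, Function.comp_def]

lemma main_dom {B : StarSubalgebra ℂ A} (hBclosed : IsClosed (B : Set A))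
    (hBcomm : ∀ x ∈ B, ∀ y ∈ B, x * y = y * x) {E : A →ₗ[ℂ] A} (hE : IsCondExp B E)
    {T : A} (hT : IsBCircular B E T) (n : ℕ) : ∀ (l : List (Bool × A)), l.length = n →
    (∀ p ∈ l, p.2 ∈ B) → Dom B (E (word T l)) (cn l • E (word T (strip l))) := by
  induction n using Nat.strong_induction_on with
  | _ n ih =>
  intro l hn hlB
  have hstripB : ∀ l : List (Bool × A), ∀ p ∈ strip l, p.2 ∈ B := by
    intro l p hp
    simp only [strip, List.mem_map] at hp
    obtain ⟨q, -, rfl⟩ := hp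
    exact B.one_mem
  by_cases hbal : IsBalanced l
  swap
  · rw [hT.expect_unbalanced l hlB hbal, hT.expect_unbalanced (strip l) (hstripB l)
      (fun h => hbal ((balanced_strip l).1 h)), smul_zero]
    exact Dom.zero B
  match l, hn, hlB, hbal with
  | [], _, _, _ =>
    simp only [strip, cn, word, List.map_nil, List.prod_nil, hE.fixes 1 B.one_mem]
    simpa using Dom.one B
  | (s, b) :: tl, hn, hlB, hbal =>
    have hb : b ∈ B := hlB (s, b) (by simp)
    have htl : ∀ p ∈ tl, p.2 ∈ B := fun p hp => hlB p (by simp [hp])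
    have hbal' : IsBalanced ((s, (1 : A)) :: strip tl) := (balanced_strip ((s, b) :: tl)).2 hbal
    have es : strip ((s, b) :: tl) = (s, (1 : A)) :: strip tl := rfl
    rw [es, recursion hT s b hb tl htl hbal,
      recursion hT s 1 B.one_mem (strip tl) (hstripB tl) hbal', Finset.smul_sum]
    have elen : (strip tl).length = tl.length := by simp [strip]
    rw [elen]
    refine Dom.sum _ fun i hi => ?_
    have hi' : i < tl.length := Finset.mem_range.1 hi
    have eget : (strip tl).getD i (true, 1) = ((tl.getD i (true, 1)).1, 1) := by
      simp [strip, List.getD_eq_getElem?_getD, hi']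
    have etake : ∀ k, (strip tl).take k = strip (tl.take k) := fun k => by
      simp [strip, List.map_take]
    have edrop : ∀ k, (strip tl).drop k = strip (tl.drop k) := fun k => by
      simp [strip, List.map_drop]
    have ebal : IsBalanced ((s, (1 : A)) :: (strip tl).take (i + 1)) ↔
        IsBalanced ((s, b) :: tl.take (i + 1)) := by
      rw [etake]; exact balanced_strip ((s, b) :: tl.take (i + 1))
    rw [eget]
    by_cases hc : (tl.getD i (true, 1)).1 = !s ∧ IsBalanced ((s, b) :: tl.take (i + 1))
    swap
    · rw [if_neg hc, if_neg (by rwa [ebal]), smul_zero]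
      exact Dom.zero B
    rw [if_pos hc, if_pos (by rwa [ebal]), etake, edrop]
    simp only [List.length_cons] at hn
    have d1 := ih (tl.take i).length (by simp; omega) (tl.take i) rfl
      (fun p hp => htl p (List.mem_of_mem_take hp))
    have d2 := ih (tl.drop (i + 1)).length (by simp; omega) (tl.drop (i + 1)) rfl
      (fun p hp => htl p (List.mem_of_mem_drop hp))
    have hbi : (tl.getD i (true, 1)).2 ∈ B := by
      rw [List.getD_eq_getElem _ _ hi']
      exact htl _ (List.getElem_mem hi')
    have D := ((((Dom.norm hBclosed hb).mul d1).map hBclosed hBcomm hE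
      (cond s T (star T))).mul (Dom.norm hBclosed hbi)).mul d2
    convert D using 1
    have ec : cn ((s, b) :: tl) = ((‖b‖ : ℝ) : ℂ) * cn (tl.take i) *
        ((‖(tl.getD i (true, 1)).2‖ : ℝ) : ℂ) * cn (tl.drop (i + 1)) := by
      rw [List.getD_eq_getElem _ _ hi']
      have : tl = tl.take i ++ tl[i] :: tl.drop (i + 1) := by simp
      have h2 : cn tl = cn (tl.take i) * (((‖tl[i].2‖ : ℝ) : ℂ) * cn (tl.drop (i + 1))) := by
        calc cn tl = cn (tl.take i ++ tl[i] :: tl.drop (i + 1)) := congrArg cn this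
          _ = _ := by
            simp only [cn, List.map_append, List.map_cons, List.prod_append, List.prod_cons,
              Complex.ofReal_mul]
      have h3 : cn ((s, b) :: tl) = ((‖b‖ : ℝ) : ℂ) * cn tl := by
        simp only [cn, List.map_cons, List.prod_cons, Complex.ofReal_mul]
      rw [h3, h2]
      ring
    rw [ec]
    simp only [smul_mul_assoc, mul_smul_comm, map_smul, one_mul, mul_one, smul_smul]
    congr 1
    ring

end Helpers

/-- For a `B`-valued circular element `T` over a commutative unital C*-subalgebra `B`,
`|E(T^{ε₁} b₁ ⋯ T^{εₙ} bₙ)| ≤ (∏ⱼ ‖bⱼ‖) E(T^{ε₁} ⋯ T^{εₙ})` in the C*-order of `B`. -/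
theorem abs_expectation_word_le
    {A : Type*} [CStarAlgebra A] [PartialOrder A] [StarOrderedRing A]
    (B : StarSubalgebra ℂ A) (hBclosed : IsClosed (B : Set A))
    (hBcomm : ∀ x ∈ B, ∀ y ∈ B, x * y = y * x)
    (E : A →ₗ[ℂ] A) (hE : IsCondExp B E)
    (T : A) (hT : IsBCircular B E T)
    (l : List (Bool × A)) (hl : l ≠ []) (hlB : ∀ p ∈ l, p.2 ∈ B) :
    cabs (E (word T l)) ≤
      (((l.map (fun p => ‖p.2‖)).prod : ℝ) : ℂ) •
        E (word T (l.map (fun p => (p.1, (1 : A))))) := by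
  have key := main_dom hBclosed hBcomm hE hT l.length l rfl hlB
  change cabs (E (word T l)) ≤ cn l • E (word T (strip l))
  generalize E (word T l) = x at key ⊢
  generalize cn l • E (word T (strip l)) = y at key ⊢
  obtain ⟨hx, hy, h⟩ := key
  have hy0 : 0 ≤ y := (nonneg_iff_chars B hBclosed hBcomm ⟨y, hy⟩).2 fun φ =>
    le_trans (by exact_mod_cast norm_nonneg _) (h φ)
  have hm : y * y - star x * x ∈ B :=
    B.sub_mem (B.mul_mem hy hy) (B.mul_mem (B.star_mem' hx) hx)
  have hle : star x * x ≤ y * y := by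
    rw [← sub_nonneg]
    refine (nonneg_iff_chars B hBclosed hBcomm ⟨_, hm⟩).2 fun φ => ?_
    have e : (⟨y * y - star x * x, hm⟩ : B) =
      ⟨y, hy⟩ * ⟨y, hy⟩ - star (⟨x, hx⟩ : B) * ⟨x, hx⟩ := rfl
    have p : (0 : ℂ) ≤ ((‖φ ⟨x, hx⟩‖ : ℝ) : ℂ) := by exact_mod_cast norm_nonneg _
    rw [e, map_sub, map_mul, map_mul, map_star, sub_nonneg]
    refine le_trans (le_of_eq ?_) (mul_le_mul (h φ) (h φ) p (p.trans (h φ)))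
    rw [Complex.star_def, Complex.conj_mul', sq]
  calc cabs x = CFC.sqrt (star x * x) := rfl
    _ ≤ CFC.sqrt (y * y) := CFC.sqrt_le_sqrt _ _ hle
    _ = y := CFC.sqrt_mul_self y hy0
end

section
/- Let A be a unital C*-algebra, B ⊆ A a commutative unital C*-subalgebra, E : A → B a faithful conditional expectation onto B, and T ∈ A an element satisfying the B-valued circular moment relations with respect to E. If T is quasinilpotent, then for all b₁, b₂ ∈ B the element b₁ T b₂ is quasinilpotent. -/
open Filter
open scoped ComplexOrder

section Helpers

set_option linter.unusedSectionVars false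

variable {A : Type*} [CStarAlgebra A] [PartialOrder A] [StarOrderedRing A]

/-- the word in `S`, `S*` with exponents prescribed by the list -/
def sword (S : A) (es : List Bool) : A := (es.map (fun e => cond e S (star S))).prod

/-- coefficient to put in front of a word in `T b`, `b* T*` -/
def pre (b : A) : List Bool → A
  | [] => 1
  | true :: _ => 1
  | false :: _ => star b

lemma pre_true (b : A) (es : List Bool) : pre b (true :: es) = 1 := rfl

lemma pre_false (b : A) (es : List Bool) : pre b (false :: es) = star b := rfl

/-- conversion of a word in `T b`, `b* T*` to a word in `T`, `T*` with coefficients. -/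
def conv (b : A) : List Bool → List (Bool × A)
  | [] => []
  | e :: es => (e, cond e b 1 * pre b es) :: conv b es

/-- balancedness for lists of exponents -/
def Bal (l : List Bool) : Prop := 2 * l.countP (fun p => p) = l.length

lemma isBalanced_iff (l : List (Bool × A)) : IsBalanced l ↔ Bal (l.map Prod.fst) := by
  simp [IsBalanced, Bal, List.countP_map, Function.comp_def]

lemma conv_fst (b : A) (es : List Bool) : (conv b es).map Prod.fst = es := by
  induction es with
  | nil => rfl
  | cons e es ih => simp [conv, ih]

lemma conv_length (b : A) (es : List Bool) : (conv b es).length = es.length := by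
  rw [← List.length_map (f := Prod.fst), conv_fst]

lemma conv_drop (b : A) (es : List Bool) (i : ℕ) :
    (conv b es).drop i = conv b (es.drop i) := by
  induction es generalizing i with
  | nil => simp [conv]
  | cons e es ih => cases i <;> simp [conv, ih]

lemma conv_getD (b : A) (es : List Bool) (i : ℕ) (hi : i < es.length) :
    (conv b es).getD i (true, 1) =
      (es.getD i true, cond (es.getD i true) b 1 * pre b (es.drop (i + 1))) := by
  induction es generalizing i with
  | nil => simp at hi
  | cons e es ih =>
    cases i with
    | zero => simp [conv]
    | succ i => simpa [conv] using ih i (by simpa using hi)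

lemma pre_drop (b : A) (es : List Bool) (i : ℕ) (hi : i < es.length) :
    pre b (es.drop i) = cond (es.getD i true) 1 (star b) := by
  rw [List.drop_eq_getElem_cons hi, List.getD_eq_getElem _ _ hi]
  cases es[i] <;> rfl

lemma pre_mem (B : StarSubalgebra ℂ A) {b : A} (hb : b ∈ B) (es : List Bool) :
    pre b es ∈ B := by
  rcases es with _ | ⟨_ | _, es⟩
  · exact one_mem B
  · exact star_mem hb
  · exact one_mem B

lemma conv_mem (B : StarSubalgebra ℂ A) {b : A} (hb : b ∈ B) (es : List Bool) :
    ∀ p ∈ conv b es, p.2 ∈ B := by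
  induction es with
  | nil => simp [conv]
  | cons e es ih =>
    intro p hp
    rcases List.mem_cons.1 hp with rfl | hp
    · refine mul_mem ?_ (pre_mem B hb es)
      cases e
      · exact one_mem B
      · exact hb
    · exact ih p hp

lemma word_take (T b : A) (es : List Bool) (i : ℕ) :
    pre b es * word T ((conv b es).take i) = sword (T * b) (es.take i) * pre b (es.drop i) := by
  induction es generalizing i with
  | nil => simp [conv, word, sword]
  | cons e es ih =>
    cases i with
    | zero => simp [word, sword]
    | succ i =>
      have := ih i
      simp only [word, sword, star_mul] at this
      cases e
      · simp only [conv, word, sword, pre_true, pre_false, List.take_succ_cons, List.map_cons, List.prod_cons,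
          List.drop_succ_cons, cond_false, mul_assoc, star_mul, one_mul, this]
      · simp only [conv, word, sword, pre_true, pre_false, List.take_succ_cons, List.map_cons, List.prod_cons,
          List.drop_succ_cons, cond_true, mul_assoc, star_mul, one_mul, this]

lemma word_all (T b : A) (es : List Bool) :
    pre b es * word T (conv b es) = sword (T * b) es := by
  have := word_take T b es es.length
  rw [List.take_of_length_le (by rw [conv_length])] at this
  simpa [pre] using this

variable {B : StarSubalgebra ℂ A} {E : A →ₗ[ℂ] A} {T : A}

lemma E_left (hE : IsCondExp B E) {b : A} (hb : b ∈ B) (x : A) : E (b * x) = b * E x := by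
  simpa using hE.bimodule b hb 1 (one_mem B) x

lemma E_right (hE : IsCondExp B E) {b : A} (hb : b ∈ B) (x : A) : E (x * b) = E x * b := by
  simpa using hE.bimodule 1 (one_mem B) b hb x

lemma E_unbal (hE : IsCondExp B E) (hT : IsBCircular B E T) {b : A} (hb : b ∈ B)
    (es : List Bool) (h : ¬ Bal es) : E (sword (T * b) es) = 0 := by
  rw [← word_all, E_left hE (pre_mem B hb es), hT.expect_unbalanced _ (conv_mem B hb es),
    mul_zero]
  rwa [isBalanced_iff, conv_fst]

lemma E_true (hE : IsCondExp B E) (hT : IsBCircular B E T) {b : A} (hb : b ∈ B)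
    (es : List Bool) (h : Bal (true :: es)) :
    E (sword (T * b) (true :: es)) = ∑ i ∈ Finset.range es.length,
      open Classical in
      if es.getD i true = false ∧ Bal (true :: es.take (i + 1)) then
        E (T * (b * E (sword (T * b) (es.take i)) * star b) * star T) *
          E (sword (T * b) (es.drop (i + 1)))
      else 0 := by
  have hb' : b * pre b es ∈ B := mul_mem hb (pre_mem B hb es)
  rw [← word_all, E_left hE (pre_mem B hb _)]
  simp only [pre_true, pre_false, conv, one_mul, cond_true]
  rw [hT.expect_cons_one _ hb' _ (conv_mem B hb es)
    (by rw [isBalanced_iff]; simpa [conv_fst] using h), conv_length]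
  refine Finset.sum_congr rfl fun i hi => ?_
  have hi := Finset.mem_range.1 hi
  have hc : IsBalanced ((true, b * pre b es) :: (conv b es).take (i + 1)) ↔
      Bal (true :: es.take (i + 1)) := by
    rw [isBalanced_iff, List.map_cons, List.map_take, conv_fst]
  rw [conv_getD b es i hi]
  by_cases hcond : es.getD i true = false ∧ Bal (true :: es.take (i + 1))
  · rw [if_pos (And.intro hcond.1 (hc.2 hcond.2)), if_pos hcond, hcond.1]
    have h1 : pre b es * E (word T ((conv b es).take i)) =
        E (sword (T * b) (es.take i)) * star b := by
      rw [← E_left hE (pre_mem B hb es), word_take, pre_drop b es i hi, hcond.1, cond_false,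
        E_right hE (star_mem hb)]
    rw [conv_drop, cond_false, one_mul, mul_assoc (E _), ← E_left hE (pre_mem B hb _), word_all,
      mul_assoc b, h1, ← mul_assoc b]
  · rw [if_neg (fun hh => hcond ⟨hh.1, hc.1 hh.2⟩), if_neg hcond]

lemma E_false (hE : IsCondExp B E) (hT : IsBCircular B E T) {b : A} (hb : b ∈ B)
    (es : List Bool) (h : Bal (false :: es)) :
    E (sword (T * b) (false :: es)) = ∑ i ∈ Finset.range es.length,
      open Classical in
      if es.getD i true = true ∧ Bal (false :: es.take (i + 1)) then
        (star b * E (star T * E (sword (T * b) (es.take i)) * T) * b) *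
          E (sword (T * b) (es.drop (i + 1)))
      else 0 := by
  have hb' : pre b es ∈ B := pre_mem B hb es
  rw [← word_all, E_left hE (pre_mem B hb _)]
  simp only [pre_true, pre_false, conv, one_mul, cond_false]
  rw [hT.expect_cons_star _ hb' _ (conv_mem B hb es)
    (by rw [isBalanced_iff]; simpa [conv_fst] using h), conv_length, Finset.mul_sum]
  refine Finset.sum_congr rfl fun i hi => ?_
  have hi := Finset.mem_range.1 hi
  have hc : IsBalanced ((false, pre b es) :: (conv b es).take (i + 1)) ↔
      Bal (false :: es.take (i + 1)) := by
    rw [isBalanced_iff, List.map_cons, List.map_take, conv_fst]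
  rw [conv_getD b es i hi]
  by_cases hcond : es.getD i true = true ∧ Bal (false :: es.take (i + 1))
  · rw [if_pos (And.intro hcond.1 (hc.2 hcond.2)), if_pos hcond, hcond.1]
    have h1 : pre b es * E (word T ((conv b es).take i)) = E (sword (T * b) (es.take i)) := by
      rw [← E_left hE (pre_mem B hb es), word_take, pre_drop b es i hi, hcond.1, cond_true,
        mul_one]
    rw [conv_drop, cond_true, h1, mul_assoc (E _), mul_assoc b, ← E_left hE (pre_mem B hb _),
      word_all]
    simp only [mul_assoc]
  · rw [if_neg (fun hh => hcond ⟨hh.1, hc.1 hh.2⟩), if_neg hcond, mul_zero]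

lemma mul_mono_comm (hBcomm : ∀ x ∈ B, ∀ y ∈ B, x * y = y * x) {x x' y y' : A}
    (hx : x ∈ B) (hx' : x' ∈ B) (hy : y ∈ B) (hy' : y' ∈ B)
    (h0 : 0 ≤ x) (hxx : x ≤ x') (h0' : 0 ≤ y) (hyy : y ≤ y') :
    0 ≤ x * y ∧ x * y ≤ x' * y' := by
  refine ⟨Commute.mul_nonneg h0 h0' (hBcomm x hx y hy), ?_⟩
  have h1 : 0 ≤ (x' - x) * y :=
    Commute.mul_nonneg (sub_nonneg.2 hxx) h0' (hBcomm _ (sub_mem hx' hx) y hy)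
  have h2 : 0 ≤ x' * (y' - y) :=
    Commute.mul_nonneg (h0.trans hxx) (sub_nonneg.2 hyy) (hBcomm _ hx' _ (sub_mem hy' hy))
  have h3 : x' * y' - x * y = (x' - x) * y + x' * (y' - y) := by noncomm_ring
  rw [← sub_nonneg, h3]
  exact add_nonneg h1 h2

lemma conj_bound (hBcomm : ∀ x ∈ B, ∀ y ∈ B, x * y = y * x) {b x : A}
    (hb : b ∈ B) (hx : x ∈ B) (h0 : 0 ≤ x) :
    b * x * star b ≤ (‖b‖ ^ 2 : ℝ) • x := by
  have h1 : b * x * star b = x * (b * star b) := by rw [hBcomm b hb x hx, mul_assoc]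
  have h2 : b * star b ≤ algebraMap ℝ A (‖b‖ ^ 2) := CStarAlgebra.mul_star_le_algebraMap_norm_sq
  have h3 : Commute x (algebraMap ℝ A (‖b‖ ^ 2) - b * star b) :=
    Commute.sub_right (Algebra.commutes (‖b‖ ^ 2) x).symm
      (hBcomm x hx _ (mul_mem hb (star_mem hb)))
  have h4 := Commute.mul_nonneg h0 (sub_nonneg.2 h2) h3
  rw [mul_sub, sub_nonneg, ← Algebra.commutes, ← Algebra.smul_def] at h4
  rwa [h1]

lemma E_mono (hE : IsCondExp B E) {x y : A} (h : x ≤ y) : E x ≤ E y := by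
  have := hE.positive _ (sub_nonneg.2 h)
  rwa [map_sub, sub_nonneg] at this

lemma E_smul (r : ℝ) (x : A) : E (r • x) = r • E x := by
  rw [← Complex.coe_smul, map_smul, Complex.coe_smul]

lemma smul_mem_B {x : A} (r : ℝ) (hx : x ∈ B) : r • x ∈ B := by
  rw [← Complex.coe_smul]; exact B.smul_mem hx _

lemma sum_bounds {s : Finset ℕ} {f g : ℕ → A} (H : ∀ i ∈ s, 0 ≤ f i ∧ f i ≤ g i) :
    0 ≤ ∑ i ∈ s, f i ∧ ∑ i ∈ s, f i ≤ ∑ i ∈ s, g i :=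
  ⟨Finset.sum_nonneg fun i hi => (H i hi).1, Finset.sum_le_sum fun i hi => (H i hi).2⟩

lemma moment_bound (hBcomm : ∀ x ∈ B, ∀ y ∈ B, x * y = y * x) (hE : IsCondExp B E)
    (hT : IsBCircular B E T) {b : A} (hb : b ∈ B) (n : ℕ) :
    ∀ es : List Bool, es.length = n → 0 ≤ E (sword (T * b) es) ∧
      E (sword (T * b) es) ≤ (‖b‖ ^ es.length : ℝ) • E (sword T es) := by
  induction n using Nat.strong_induction_on with
  | _ n ih =>
  intro es hn
  have key : ∀ es : List Bool, E (sword T es) = E (sword (T * 1) es) := by simp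
  by_cases hbal : Bal es
  swap
  · rw [key, E_unbal hE hT hb es hbal, E_unbal hE hT (one_mem B) es hbal]; simp
  rcases es with _ | ⟨e, es⟩
  · simp [sword, hE.fixes 1 (one_mem B)]
  have hlen : es.length < n := by simp at hn; omega
  have ihd : ∀ i, _ := fun i => ih (es.drop i).length (by simp; omega) (es.drop i) rfl
  have iht : ∀ i, _ := fun i => ih (es.take i).length (by simp; omega) (es.take i) rfl
  have hmem := hE.mem_range
  cases e
  · rw [key, E_false hE hT hb es hbal, E_false hE hT (one_mem B) es hbal]
    simp only [mul_one, star_one, one_mul]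
    rw [Finset.smul_sum]
    refine sum_bounds fun i hi => ?_
    have hi := Finset.mem_range.1 hi
    split_ifs with hc
    swap
    · simp
    obtain ⟨t0, t1⟩ := iht i
    obtain ⟨d0, d1⟩ := ihd (i + 1)
    have e0 := hE.positive _ (star_left_conjugate_nonneg t0 T)
    have e1 := E_mono hE (star_left_conjugate_le_conjugate t1 T)
    rw [mul_smul_comm, smul_mul_assoc, E_smul] at e1
    have f0 := star_left_conjugate_nonneg e0 b
    have f1 := conj_bound hBcomm (star_mem hb) (hmem _) e0
    rw [star_star, norm_star] at f1
    have f2 := f1.trans (smul_le_smul_of_nonneg_left e1 (by positivity))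
    have := mul_mono_comm hBcomm (mul_mem (mul_mem (star_mem hb) (hmem _)) hb)
      (smul_mem_B _ (smul_mem_B _ (hmem _)))
      (hmem _) (smul_mem_B _ (hmem _)) f0 f2 d0 d1
    refine ⟨this.1, this.2.trans_eq ?_⟩
    rw [smul_smul, smul_mul_smul_comm]
    congr 1
    rw [← pow_add, ← pow_add]
    congr 1
    simp; omega
  · rw [key, E_true hE hT hb es hbal, E_true hE hT (one_mem B) es hbal]
    simp only [mul_one, star_one, one_mul]
    rw [Finset.smul_sum]
    refine sum_bounds fun i hi => ?_
    have hi := Finset.mem_range.1 hi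
    split_ifs with hc
    swap
    · simp
    obtain ⟨t0, t1⟩ := iht i
    obtain ⟨d0, d1⟩ := ihd (i + 1)
    have f0 := star_right_conjugate_nonneg t0 b
    have f1 := conj_bound hBcomm hb (hmem _) t0
    have f2 := f1.trans (smul_le_smul_of_nonneg_left t1 (by positivity))
    have e0 := hE.positive _ (star_right_conjugate_nonneg f0 T)
    have e1 := E_mono hE (star_right_conjugate_le_conjugate f2 T)
    rw [smul_smul, mul_smul_comm, smul_mul_assoc, E_smul] at e1
    have := mul_mono_comm hBcomm (hmem _) (smul_mem_B _ (hmem _))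
      (hmem _) (smul_mem_B _ (hmem _)) e0 e1 d0 d1
    refine ⟨this.1, this.2.trans_eq ?_⟩
    rw [smul_mul_smul_comm]
    congr 1
    rw [← pow_add, ← pow_add]
    congr 1
    simp; omega

/-- For a faithful expectation, norms are controlled by moments. -/
lemma norm_le_of_moments (hE : IsCondExp B E)
    (hfaithful : ∀ x : A, E (star x * x) = 0 → x = 0) {y : A} (hy : 0 ≤ y) {K : ℝ}
    (hK : 0 ≤ K) (h : ∀ p : ℕ, ‖E (y ^ p)‖ ≤ K ^ p) : ‖y‖ ≤ K := by
  by_contra! hlt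
  obtain ⟨L, hKL, hLy⟩ := exists_between hlt
  have hL : 0 < L := hK.trans_lt hKL
  have hy0 : 0 < ‖y‖ := hL.trans hLy
  have : Nontrivial A := ⟨y, 0, norm_pos_iff.1 hy0⟩
  have hsa : IsSelfAdjoint y := .of_nonneg hy
  set f : ℝ → ℝ := fun t => max (t - L) 0 / ‖y‖ with hf
  have hfc : Continuous f := by fun_prop
  set z := cfc f y with hz
  have hspec : ∀ t ∈ spectrum ℝ y, 0 ≤ t ∧ t ≤ ‖y‖ := fun t ht =>
    ⟨spectrum_nonneg_of_nonneg hy ht, (le_abs_self t).trans (spectrum.norm_le_norm_of_mem ht)⟩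
  have hz0 : 0 ≤ z := cfc_nonneg fun t _ => by positivity
  have hzne : z ≠ 0 := by
    intro h0
    have h1 : f ‖y‖ ∈ spectrum ℝ z := by
      rw [hz, cfc_map_spectrum f y hsa hfc.continuousOn]
      exact ⟨_, CStarAlgebra.norm_mem_spectrum_of_nonneg hy, rfl⟩
    rw [h0, spectrum.zero_eq, Set.mem_singleton_iff] at h1
    have : 0 < f ‖y‖ := div_pos (lt_max_of_lt_left (by linarith)) hy0
    linarith
  have hEz : E z ≠ 0 := by
    intro h0
    have hs : star (CFC.sqrt z) * CFC.sqrt z = z := by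
      rw [(IsSelfAdjoint.of_nonneg (CFC.sqrt_nonneg z)).star_eq, CFC.sqrt_mul_sqrt_self z hz0]
    have h1 := hfaithful (CFC.sqrt z) (by rw [hs, h0])
    rw [h1, mul_zero] at hs
    exact hzne hs.symm
  have hle : ∀ p : ℕ, L ^ p • z ≤ y ^ p := by
    intro p
    rw [hz, ← cfc_smul (L ^ p) f y hfc.continuousOn, ← cfc_pow_id (R := ℝ) y p hsa]
    refine cfc_mono (fun t ht => ?_) (by fun_prop) (by fun_prop)
    obtain ⟨ht0, ht1⟩ := hspec t ht
    rcases le_total t L with htL | htL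
    · have : f t = 0 := by simp [hf, htL]
      rw [this, smul_zero]; positivity
    · have : f t ≤ 1 := by
        rw [hf]
        exact (div_le_one hy0).2 (max_le (by linarith) hy0.le)
      calc L ^ p • f t ≤ L ^ p * 1 := by
            rw [smul_eq_mul]; gcongr
        _ ≤ t ^ p := by rw [mul_one]; gcongr
  have hb : ∀ p : ℕ, ‖E z‖ ≤ (K / L) ^ p := by
    intro p
    have h1 := E_mono hE (hle p)
    rw [E_smul] at h1
    have h2 := CStarAlgebra.norm_le_norm_of_nonneg_of_le
      (smul_nonneg (by positivity) (hE.positive z hz0)) h1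
    rw [norm_smul, Real.norm_of_nonneg (by positivity)] at h2
    rw [div_pow, le_div_iff₀ (by positivity), mul_comm]
    exact h2.trans (h p)
  have hlim := tendsto_pow_atTop_nhds_zero_of_lt_one (div_nonneg hK hL.le) ((div_lt_one hL).2 hKL)
  have := ge_of_tendsto' hlim hb
  exact hEz (norm_le_zero_iff.1 this)

lemma exists_sword (n p : ℕ) : ∃ es : List Bool, es.length = p * (2 * n) ∧
    ∀ S : A, sword S es = (star (S ^ n) * S ^ n) ^ p := by
  induction p with
  | zero => exact ⟨[], by simp, by simp [sword]⟩
  | succ p ih =>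
    obtain ⟨es, h1, h2⟩ := ih
    refine ⟨es ++ (List.replicate n false ++ List.replicate n true), ?_, fun S => ?_⟩
    · simp [h1]; ring
    · have := h2 S
      simp only [sword] at this
      simp [sword, this, pow_succ]

lemma norm_pow_bound (hBcomm : ∀ x ∈ B, ∀ y ∈ B, x * y = y * x) (hE : IsCondExp B E)
    (hfaithful : ∀ x : A, E (star x * x) = 0 → x = 0)
    (hT : IsBCircular B E T) {b : A} (hb : b ∈ B) (n : ℕ) :
    ‖(T * b) ^ n‖ ≤ ‖b‖ ^ n * ‖T ^ n‖ := by
  have hmain : ‖star ((T * b) ^ n) * (T * b) ^ n‖ ≤ (‖b‖ ^ n * ‖T ^ n‖) ^ 2 := by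
    refine norm_le_of_moments hE hfaithful (star_mul_self_nonneg _) (by positivity) fun p => ?_
    obtain ⟨es, h1, h2⟩ := exists_sword (A := A) n p
    obtain ⟨h3, h4⟩ := moment_bound hBcomm hE hT hb _ es rfl
    have h5 := CStarAlgebra.norm_le_norm_of_nonneg_of_le h3 h4
    rw [h2, h2, norm_smul, Real.norm_of_nonneg (by positivity), h1] at h5
    refine h5.trans ?_
    have h6 : ‖E ((star (T ^ n) * T ^ n) ^ p)‖ ≤ (‖T ^ n‖ ^ 2) ^ p := by
      refine (hE.contractive _).trans ?_
      rcases p with _ | p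
      · rcases subsingleton_or_nontrivial A with hA | hA
        · rw [Subsingleton.elim ((star (T ^ n) * T ^ n) ^ 0) 0]; simp
        · simp
      · refine (norm_pow_le' _ p.succ_pos).trans ?_
        rw [CStarRing.norm_star_mul_self, sq]
    calc _ ≤ ‖b‖ ^ (p * (2 * n)) * (‖T ^ n‖ ^ 2) ^ p := by gcongr
      _ = _ := by ring
  rw [CStarRing.norm_star_mul_self, ← sq] at hmain
  exact le_of_sq_le_sq hmain (by positivity)

end Helpers

/-- If `T` is a quasinilpotent `B`-valued circular element over a commutative unital
C*-subalgebra `B`, with respect to a faithful conditional expectation `E`, then `b₁ T b₂`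
is quasinilpotent for all `b₁, b₂ ∈ B`.  Quasinilpotency is expressed as vanishing of the
spectral radius. -/
theorem quasinilpotent_smul_word
    {A : Type*} [CStarAlgebra A] [PartialOrder A] [StarOrderedRing A]
    (B : StarSubalgebra ℂ A) (hBclosed : IsClosed (B : Set A))
    (hBcomm : ∀ x ∈ B, ∀ y ∈ B, x * y = y * x)
    (E : A →ₗ[ℂ] A) (hE : IsCondExp B E)
    (hfaithful : ∀ x : A, E (star x * x) = 0 → x = 0)
    (T : A) (hT : IsBCircular B E T)
    (hTq : spectralRadius ℂ T = 0)
    (b₁ : A) (hb₁ : b₁ ∈ B) (b₂ : A) (hb₂ : b₂ ∈ B) :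
    spectralRadius ℂ (b₁ * T * b₂) = 0 := by
  have hb : b₂ * b₁ ∈ B := mul_mem hb₂ hb₁
  have hS : spectralRadius ℂ (T * (b₂ * b₁)) = 0 := by
    have h1 := spectrum.pow_norm_pow_one_div_tendsto_nhds_spectralRadius (T * (b₂ * b₁))
    have h2 := spectrum.pow_norm_pow_one_div_tendsto_nhds_spectralRadius T
    rw [hTq] at h2
    have h3 := ENNReal.Tendsto.const_mul (a := ENNReal.ofReal ‖b₂ * b₁‖) h2
      (Or.inr ENNReal.ofReal_ne_top)
    rw [mul_zero] at h3
    refine le_antisymm (le_of_tendsto_of_tendsto h1 h3 ?_) bot_le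
    filter_upwards [Filter.eventually_gt_atTop 0] with n hn
    rw [← ENNReal.ofReal_mul (norm_nonneg _)]
    refine ENNReal.ofReal_le_ofReal ?_
    have h4 := norm_pow_bound hBcomm hE hfaithful hT hb n
    calc ‖(T * (b₂ * b₁)) ^ n‖ ^ (1 / n : ℝ)
        ≤ (‖b₂ * b₁‖ ^ n * ‖T ^ n‖) ^ (1 / n : ℝ) := by gcongr
      _ = _ := by
        rw [Real.mul_rpow (by positivity) (by positivity), one_div,
          Real.pow_rpow_inv_natCast (norm_nonneg _) hn.ne']
  rw [spectralRadius, ENNReal.iSup_eq_zero] at hS ⊢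
  intro k
  rw [ENNReal.iSup_eq_zero]
  intro hk
  by_cases hk0 : k = 0
  · simp [hk0]
  have hmem : k ∈ spectrum ℂ (T * (b₂ * b₁)) := by
    have h1 : k ∈ spectrum ℂ (b₁ * (T * b₂)) \ {0} := ⟨by rwa [← mul_assoc], hk0⟩
    rw [spectrum.nonzero_mul_comm] at h1
    simpa [mul_assoc] using h1.1
  simpa [hmem] using hS k
end
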